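/- Let D be a finite digraph and suppose (X, X̄) is a partition of the vertex set of D into two nonempty parts such that no edge of D has its tail in X̄ and its head in X. Let S be the set of edges with tail in X and head in X̄ (a directed cut). Then adi(D) = adi(D − S), where D − S is obtained from D by deleting the edges in S. -/

import Mathlib

open Function

section Defs

variable {V : Type*}

/-- The vertex set `S` contains a directed cycle of the digraph `D`, i.e. there is a
closed directed walk of positive length all of whose vertices lie in `S`. -/
def HasDicycle (D : V → V → Prop) (S : Set V) : Prop :=
  ∃ v, Relation.TransGen (fun a b => a ∈ S ∧ b ∈ S ∧ D a b) v v

/-- A coloring of the vertices of the digraph `D` with `k` colors all of whose color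
classes are acyclic. -/
def IsAcyclicColoring (D : V → V → Prop) {k : ℕ} (c : V → Fin k) : Prop :=
  ∀ i, ¬ HasDicycle D (c ⁻¹' {i})

/-- A complete acyclic coloring of the digraph `D` with exactly `k` colors: every color is
used, every color class is acyclic, and the union of any two distinct color classes
contains a directed cycle. -/
def IsCompleteAcyclicColoring (D : V → V → Prop) {k : ℕ} (c : V → Fin k) : Prop :=
  Surjective c ∧ IsAcyclicColoring D c ∧
    ∀ i j : Fin k, i ≠ j → HasDicycle D (c ⁻¹' {i} ∪ c ⁻¹' {j})

/-- The dichromatic number: the minimum number of colors in an acyclic coloring. -/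
noncomputable def dichromaticNumber (D : V → V → Prop) : ℕ :=
  sInf {k | ∃ c : V → Fin k, IsAcyclicColoring D c}

/-- The adichromatic number: the maximum number of colors in a complete acyclic coloring. -/
noncomputable def adichromaticNumber (D : V → V → Prop) : ℕ :=
  sSup {k | ∃ c : V → Fin k, IsCompleteAcyclicColoring D c}

/-- A coloring of the vertices of the graph `G` all of whose color classes induce forests. -/
def IsArborealColoring (G : SimpleGraph V) {k : ℕ} (c : V → Fin k) : Prop :=
  ∀ i, (G.induce (c ⁻¹' {i})).IsAcyclic

/-- A complete arboreal coloring of `G` with exactly `k` colors: every color is used, every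
color class induces a forest, and the union of any two distinct color classes contains a
cycle. -/
def IsCompleteArborealColoring (G : SimpleGraph V) {k : ℕ} (c : V → Fin k) : Prop :=
  Surjective c ∧ IsArborealColoring G c ∧
    ∀ i j : Fin k, i ≠ j → ¬ (G.induce (c ⁻¹' {i} ∪ c ⁻¹' {j})).IsAcyclic

/-- The vertex arboricity: the minimum number of colors in an arboreal coloring. -/
noncomputable def vertexArboricity (G : SimpleGraph V) : ℕ :=
  sInf {k | ∃ c : V → Fin k, IsArborealColoring G c}

/-- The a-vertex arboricity: the maximum number of colors in a complete arboreal coloring. -/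
noncomputable def avertexArboricity (G : SimpleGraph V) : ℕ :=
  sSup {k | ∃ c : V → Fin k, IsCompleteArborealColoring G c}

/-- The minimum size of a directed feedback vertex set of the digraph `D`. -/
noncomputable def digraphFVSNumber [Fintype V] (D : V → V → Prop) : ℕ :=
  sInf {n | ∃ F : Finset V, F.card = n ∧ ¬ HasDicycle D ((↑F : Set V)ᶜ)}

/-- The minimum size of a feedback vertex set of the graph `G`. -/
noncomputable def graphFVSNumber [Fintype V] (G : SimpleGraph V) : ℕ :=
  sInf {n | ∃ F : Finset V, F.card = n ∧ (G.induce ((↑F : Set V)ᶜ)).IsAcyclic}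

/-- A complete coloring in the sense of the diachromatic number: all classes are acyclic
and for every ordered pair `(i, j)` of distinct colors there is an arc with tail colored
`j` and head colored `i`. -/
def IsCompleteDiColoring (D : V → V → Prop) {k : ℕ} (c : V → Fin k) : Prop :=
  Surjective c ∧ IsAcyclicColoring D c ∧
    ∀ i j : Fin k, i ≠ j → ∃ u v, D u v ∧ c u = j ∧ c v = i

/-- The diachromatic number of the digraph `D`. -/
noncomputable def diachromaticNumber (D : V → V → Prop) : ℕ :=
  sSup {k | ∃ c : V → Fin k, IsCompleteDiColoring D c}

/-- A complete proper coloring of the graph `G`: proper, surjective, and any two distinct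
colors appear together on some edge. -/
def IsCompleteProperColoring (G : SimpleGraph V) {k : ℕ} (c : V → Fin k) : Prop :=
  Surjective c ∧ (∀ u v, G.Adj u v → c u ≠ c v) ∧
    ∀ i j : Fin k, i ≠ j → ∃ u v, G.Adj u v ∧ c u = i ∧ c v = j

/-- The achromatic number: the maximum number of colors in a complete proper coloring. -/
noncomputable def achromaticNumber (G : SimpleGraph V) : ℕ :=
  sSup {k | ∃ c : V → Fin k, IsCompleteProperColoring G c}

/-- The subdigraph of `D` induced by the vertex set `S`. -/
def induceDigraph (D : V → V → Prop) (S : Set V) : S → S → Prop :=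
  fun a b => D a.1 b.1

/-- `D` is an orientation of the simple graph `G`: every arc of `D` is an edge of `G`, and
every edge of `G` is given exactly one of its two possible directions. -/
def IsOrientation (G : SimpleGraph V) (D : V → V → Prop) : Prop :=
  (∀ u v, D u v → G.Adj u v) ∧ ∀ u v, G.Adj u v → Xor' (D u v) (D v u)

end Defs

/-!
A cycle leaving `X` through the directed cut could never return to `X`, so no directed cycle uses
an edge of the cut. Deleting edges that lie on no directed cycle keeps every directed cycle, hence
the vertex sets containing one. Completeness and acyclicity of a coloring depend only on these
vertex sets, so `D` and `D − S` have the same complete acyclic colorings.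
-/

section EdgesOnCycles

open Relation

variable {V : Type*}

theorem transGen_of_return_path {r r' : V → V → Prop}
    (hr : ∀ a b, r a b → ReflTransGen r b a → r' a b) {a b : V}
    (hab : TransGen r a b) (hba : ReflTransGen r b a) : TransGen r' a b := by
  induction hab with
  | single hab => exact .single (hr _ _ hab hba)
  | tail hab hbc ih => exact (ih (hba.head hbc)).tail (hr _ _ hbc (hba.trans hab.to_reflTransGen))

theorem mem_of_reflTransGen {r : V → V → Prop} {s : Set V}
    (hs : ∀ a b, r a b → a ∈ s → b ∈ s) {a b : V} (hab : ReflTransGen r a b) (ha : a ∈ s) :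
    b ∈ s := by
  induction hab with
  | refl => exact ha
  | tail _ hbc hb => exact hs _ _ hbc hb

variable {D D' : V → V → Prop}

theorem HasDicycle.mono (hD : D' ≤ D) {S : Set V} : HasDicycle D' S → HasDicycle D S :=
  fun ⟨v, hv⟩ => ⟨v, TransGen.mono (fun a b h => ⟨h.1, h.2.1, hD a b h.2.2⟩) v v hv⟩

theorem HasDicycle.of_forall_return_path
    (hcycle : ∀ a b, D a b → ReflTransGen D b a → D' a b) {S : Set V} :
    HasDicycle D S → HasDicycle D' S := by
  rintro ⟨v, hv⟩
  refine ⟨v, transGen_of_return_path (fun a b ⟨ha, hb, hab⟩ hba => ⟨ha, hb, ?_⟩) hv .refl⟩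
  exact hcycle a b hab (ReflTransGen.mono (fun _ _ h => h.2.2) b a hba)

theorem isCompleteAcyclicColoring_congr (h : ∀ S, HasDicycle D S ↔ HasDicycle D' S)
    {k : ℕ} (c : V → Fin k) :
    IsCompleteAcyclicColoring D c ↔ IsCompleteAcyclicColoring D' c := by
  simp only [IsCompleteAcyclicColoring, IsAcyclicColoring, h]

theorem adichromatic_directed_cut_general (hD : D' ≤ D)
    (hcycle : ∀ a b, D a b → ReflTransGen D b a → D' a b) :
    adichromaticNumber D = adichromaticNumber D' := by
  have hasDicycle_iff (S : Set V) : HasDicycle D S ↔ HasDicycle D' S :=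
    ⟨.of_forall_return_path hcycle, .mono hD⟩
  simp only [adichromaticNumber, isCompleteAcyclicColoring_congr hasDicycle_iff]

end EdgesOnCycles

/-- deleting the edges of a directed cut `S = δ⁺(X)` does not change the
adichromatic number: `adi(D) = adi(D − S)`. -/
theorem adichromatic_directed_cut {V : Type*} [Fintype V] (D : V → V → Prop)
    (hD : Irreflexive D) (X : Set V) (hX : X.Nonempty) (hXc : Xᶜ.Nonempty)
    (hcut : ∀ a b, D a b → a ∈ Xᶜ → b ∉ X) :
    adichromaticNumber D =
      adichromaticNumber (fun a b => D a b ∧ ¬ (a ∈ X ∧ b ∈ Xᶜ)) := by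
  exact adichromatic_directed_cut_general (fun _ _ h => h.1) fun a b hab hba =>
    ⟨hab, fun ⟨ha, hb⟩ => mem_of_reflTransGen hcut hba hb ha⟩
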